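/- Let Ω ⊆ ℍ be a domain, θ ∈ [0,2π), u ∈ ℍ. Let z ∈ Ω and ε > 0 be such that the closed ball $\overline{B(z,ε)}$ ⊆ Ω. Then there exists a constant k > 0 (depending only on θ, u, z, ε) such that for every f ∈ C¹(Ω,ℍ) with ${}^θ_u𝒟 f = 0$ on Ω one has $|f(z)| ≤ k\,\big(∫_{B(z,ε)} |f(ζ)|²\,dμ_ζ\big)^{1/2}$. -/

import Mathlib

open MeasureTheory

noncomputable section

/-- The real quaternions `ℍ`. -/
abbrev H4 : Type := Quaternion ℝ

instance : MeasurableSpace H4 := borel _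
instance : BorelSpace H4 := ⟨rfl⟩

/-- The quaternion unit `i`. -/
def qI : H4 := ⟨0, 1, 0, 0⟩
/-- The quaternion unit `j`. -/
def qJ : H4 := ⟨0, 0, 1, 0⟩
/-- `e^{iθ} = cos θ + (sin θ) i` as a quaternion. -/
def eIθ (θ : ℝ) : H4 := ⟨Real.cos θ, Real.sin θ, 0, 0⟩
/-- The basis direction `i e^{iθ} j`. -/
def e2 (θ : ℝ) : H4 := qI * eIθ θ * qJ
/-- The basis direction `e^{iθ} j`. -/
def e3 (θ : ℝ) : H4 := eIθ θ * qJ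

/-- Third θ-coordinate of a quaternion `z = x₀ + x₁ i + x₂ (i e^{iθ} j) + x₃ (e^{iθ} j)`. -/
def x2θ (θ : ℝ) (z : H4) : ℝ := -z.imJ * Real.sin θ + z.imK * Real.cos θ
/-- Fourth θ-coordinate of a quaternion. -/
def x3θ (θ : ℝ) (z : H4) : ℝ := z.imJ * Real.cos θ + z.imK * Real.sin θ

/-- The θ-inner product `⟨u,z⟩_θ`: the dot product of θ-coordinates. -/
def innerθ (θ : ℝ) (u z : H4) : ℝ :=
  u.re * z.re + u.imI * z.imI + x2θ θ u * x2θ θ z + x3θ θ u * x3θ θ z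

/-- Left θ-Cauchy–Riemann operator
`{}^θ𝒟 f = ∂f/∂x₀ + i ∂f/∂x₁ + (i e^{iθ} j) ∂f/∂x₂ + (e^{iθ} j) ∂f/∂x₃`. -/
def Dl (θ : ℝ) (f : H4 → H4) (z : H4) : H4 :=
  fderiv ℝ f z 1 + qI * fderiv ℝ f z qI + e2 θ * fderiv ℝ f z (e2 θ) +
    e3 θ * fderiv ℝ f z (e3 θ)

/-- Left (θ,u)-Cauchy–Riemann operator `{}^θ_u𝒟 f = {}^θ𝒟 f + u f`. -/
def Dlu (θ : ℝ) (u : H4) (f : H4 → H4) (z : H4) : H4 := Dl θ f z + u * f z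

/-- Right θ-Cauchy–Riemann operator. -/
def Dr (θ : ℝ) (f : H4 → H4) (z : H4) : H4 :=
  fderiv ℝ f z 1 + fderiv ℝ f z qI * qI + fderiv ℝ f z (e2 θ) * e2 θ +
    fderiv ℝ f z (e3 θ) * e3 θ

/-- Right (θ,u)-Cauchy–Riemann operator `{}^θ𝒟_{r,u} f = {}^θ𝒟_r f + f u`. -/
def Dru (θ : ℝ) (u : H4) (f : H4 → H4) (z : H4) : H4 := Dr θ f z + f z * u

/-- Embedding of ℂ into the quaternions, `ℂ ≅ ℝ + ℝi ⊂ ℍ`. -/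
def toH (a : ℂ) : H4 := ⟨a.re, a.im, 0, 0⟩

/-- First complex θ-component of a quaternion: `z₁ = x₀ + x₁ i`. -/
def c1 (z : H4) : ℂ := ⟨z.re, z.imI⟩
/-- Second complex θ-component of a quaternion: `z₂ = x₂ + x₃ i`. -/
def c2 (θ : ℝ) (z : H4) : ℂ := ⟨x2θ θ z, x3θ θ z⟩

/-- Wirtinger operator `∂/∂z̄₁ = ∂/∂x₀ + i ∂/∂x₁` on ℂ-valued functions. -/
def db1 (f : H4 → ℂ) (z : H4) : ℂ := fderiv ℝ f z 1 + Complex.I * fderiv ℝ f z qI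
/-- Wirtinger operator `∂/∂z̄₂ = ∂/∂x₂ + i ∂/∂x₃` on ℂ-valued functions. -/
def db2 (θ : ℝ) (f : H4 → ℂ) (z : H4) : ℂ :=
  fderiv ℝ f z (e2 θ) + Complex.I * fderiv ℝ f z (e3 θ)
/-- Wirtinger operator `∂/∂z₂ = ∂/∂x₂ − i ∂/∂x₃` on ℂ-valued functions. -/
def dz2 (θ : ℝ) (f : H4 → ℂ) (z : H4) : ℂ :=
  fderiv ℝ f z (e2 θ) - Complex.I * fderiv ℝ f z (e3 θ)

/-- `e^{iθ}` as a complex number. -/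
def cexpI (θ : ℝ) : ℂ := ⟨Real.cos θ, Real.sin θ⟩

/-!
Let `σ` be the symbol of the Cauchy–Riemann operator `D`, here left multiplication of quaternions. A
`C¹` solution of `D f = 0` is not known in advance to be twice differentiable, so the factorisation
`D' D = Δ` with the conjugate operator is used in weak form: integrating by parts against a
compactly supported field with symmetric Jacobian, the identity `σ'(a) σ(c) + σ'(c) σ(a) = 2⟨a, c⟩`
makes `f` weakly harmonic. Testing against radial fields gives the mean value property with a radial
weight. The lower-order term disappears under the substitution `g(x) = e^{⟨u, x - z⟩} f(x)`, since
`D g = e^{⟨u, x - z⟩} (D f + u f)`; as `g(z) = f(z)`, the mean value property and the Cauchy–Schwarz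
inequality bound `f(z)` by the `L²` norm of `f` on the ball.
-/

open Metric Set
open scoped RealInnerProductSpace Topology

section Integration

variable {X F : Type*} [TopologicalSpace X] [MeasurableSpace X] [OpensMeasurableSpace X]
  {μ : Measure X} [IsFiniteMeasureOnCompacts μ] [NormedAddCommGroup F] [NormedSpace ℝ F]

lemma integrable_smul_of_tsupport_subset {s : Set X} {w : X → ℝ} {g : X → F}
    (hw : Continuous w) (hwc : HasCompactSupport w) (hs : IsOpen s) (hws : tsupport w ⊆ s)
    (hg : ContinuousOn g s) : Integrable (fun x => w x • g x) μ := by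
  have hcont : Continuous fun x => w x • g x :=
    (hw.continuousOn.smul hg).continuous_of_tsupport_subset hs
      ((tsupport_smul_subset_left w g).trans hws)
  exact hcont.integrable_of_hasCompactSupport hwc.smul_right

lemma hasDerivAt_setIntegral_of_isCompact [T2Space X]
    [TopologicalSpace.PseudoMetrizableSpace X] {K : Set X} (hK : IsCompact K)
    {t : ℝ} {V : Set ℝ} (hV : V ∈ 𝓝 t) {g g' : ℝ → X → F}
    (hg : ∀ τ ∈ V, ContinuousOn (g τ) K)
    (hg' : ContinuousOn (Function.uncurry g') (V ×ˢ K))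
    (hderiv : ∀ τ ∈ V, ∀ x ∈ K, HasDerivAt (fun τ => g τ x) (g' τ x) τ) :
    HasDerivAt (fun τ => ∫ x in K, g τ x ∂μ) (∫ x in K, g' t x ∂μ) t := by
  obtain ⟨δ, hδ, hδV⟩ := nhds_basis_closedBall.mem_iff.1 hV
  obtain ⟨C, hC⟩ := ((isCompact_closedBall t δ).prod hK).exists_bound_of_continuousOn
    (hg'.mono (prod_mono_left hδV))
  have htV : t ∈ V := mem_of_mem_nhds hV
  have hint : ∀ τ ∈ V, IntegrableOn (g τ) K μ := fun τ hτ => (hg τ hτ).integrableOn_compact hK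
  have hint' : IntegrableOn (g' t) K μ :=
    (hg'.comp (by fun_prop) fun x hx => ⟨htV, hx⟩ :
      ContinuousOn (Function.uncurry g' ∘ Prod.mk t) K).integrableOn_compact hK
  have hall : ∀ᵐ x ∂μ.restrict K, x ∈ K := ae_restrict_mem hK.measurableSet
  refine (hasDerivAt_integral_of_dominated_loc_of_deriv_le (bound := fun _ => C)
    (closedBall_mem_nhds t hδ) ?_ (hint t htV) hint'.aestronglyMeasurable ?_
    (integrableOn_const hK.measure_lt_top.ne) ?_).2
  · filter_upwards [hV] with τ hτ using (hint τ hτ).aestronglyMeasurable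
  · filter_upwards [hall] with x hx τ hτ using hC (τ, x) ⟨hτ, hx⟩
  · filter_upwards [hall] with x hx τ hτ using hderiv τ (hδV hτ) x hx

end Integration

lemma integral_eq_zero_of_odd {G F : Type*} [AddGroup G] [MeasurableSpace G] [MeasurableNeg G]
    {μ : Measure G} [μ.IsNegInvariant] [NormedAddCommGroup F] [NormedSpace ℝ F] {g : G → F}
    (hg : Function.Odd g) : ∫ x, g x ∂μ = 0 := by
  have : IsAddTorsionFree F := .of_isTorsionFree ℝ F
  rw [← self_eq_neg, ← integral_neg]
  simpa only [hg _] using (integral_neg_eq_self g μ).symm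

section Calculus

variable {E F : Type*} [NormedAddCommGroup E] [NormedSpace ℝ E] [NormedAddCommGroup F]
  [NormedSpace ℝ F] [MeasurableSpace E] [BorelSpace E] {μ : Measure E} {s : Set E}

lemma integral_smul_fderiv_eq_neg_of_tsupport_subset [FiniteDimensional ℝ E]
    [μ.IsAddHaarMeasure] {w : E → ℝ} {f : E → F} (hw : ContDiff ℝ 1 w)
    (hwc : HasCompactSupport w) (hs : IsOpen s) (hws : tsupport w ⊆ s) (hf : ContDiffOn ℝ 1 f s)
    (v : E) : ∫ x, w x • fderiv ℝ f x v ∂μ = -∫ x, fderiv ℝ w x v • f x ∂μ := by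
  have hf' : ContinuousOn (fun x => fderiv ℝ f x v) s :=
    (hf.continuousOn_fderiv_of_isOpen hs le_rfl).clm_apply continuousOn_const
  have hw' : Continuous fun x => fderiv ℝ w x v :=
    (hw.continuous_fderiv one_ne_zero).clm_apply continuous_const
  refine integral_smul_fderiv_eq_neg_fderiv_smul_of_integrable
    (integrable_smul_of_tsupport_subset hw' (hwc.fderiv_apply ℝ v) hs
      ((tsupport_fderiv_apply_subset ℝ v).trans hws) hf.continuousOn)
    (integrable_smul_of_tsupport_subset hw.continuous hwc hs hws hf')
    (integrable_smul_of_tsupport_subset hw.continuous hwc hs hws hf.continuousOn)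
    (fun x _ => hw.differentiable one_ne_zero x) fun x hx => ?_
  exact (hf.contDiffAt (hs.mem_nhds (hws hx))).differentiableAt one_ne_zero

lemma hasDerivAt_integral_smul_comp_dilation [IsFiniteMeasureOnCompacts μ] {w : E → ℝ} {f : E → F}
    (hw : Continuous w) (hwc : HasCompactSupport w) (hs : IsOpen s) (hf : ContDiffOn ℝ 1 f s)
    {z : E} {t : ℝ} (hts : ∀ y ∈ tsupport w, z + t • y ∈ s) :
    HasDerivAt (fun τ : ℝ => ∫ y, w y • f (z + τ • y) ∂μ)
      (∫ y, w y • fderiv ℝ f (z + t • y) y ∂μ) t := by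
  have hdil : Continuous fun p : ℝ × E => z + p.1 • p.2 := by fun_prop
  have hnear : {τ | ∀ y ∈ tsupport w, z + τ • y ∈ s} ∈ 𝓝 t :=
    hwc.eventually_forall_of_forall_eventually fun y hy =>
      hdil.continuousAt.eventually (hs.mem_nhds (hts y hy))
  have hrestrict : ∀ g : E → F, ∫ y in tsupport w, w y • g y ∂μ = ∫ y, w y • g y ∂μ := fun g =>
    setIntegral_eq_integral_of_forall_compl_eq_zero fun y hy => by
      rw [image_eq_zero_of_notMem_tsupport hy, zero_smul]
  simp only [← hrestrict]
  refine hasDerivAt_setIntegral_of_isCompact hwc hnear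
    (g' := fun τ y => w y • fderiv ℝ f (z + τ • y) y) (fun τ hτ => ?_) ?_ fun τ hτ y hy => ?_
  · exact hw.continuousOn.smul (hf.continuousOn.comp (by fun_prop) hτ)
  · exact (hw.comp continuous_snd).continuousOn.smul
      (((hf.continuousOn_fderiv_of_isOpen hs le_rfl).comp hdil.continuousOn
        fun p hp => hp.1 p.2 hp.2).clm_apply continuousOn_snd)
  · have hline : HasDerivAt (fun τ : ℝ => z + τ • y) y τ := by
      simpa using ((hasDerivAt_id τ).smul_const y).const_add z
    have hfx := (hf.contDiffAt (hs.mem_nhds (hτ y hy))).differentiableAt one_ne_zero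
    exact (hfx.hasFDerivAt.comp_hasDerivAt τ hline).const_smul (w y)

end Calculus

section CauchySchwarz

variable {α F : Type*} [MeasurableSpace α] {μ : Measure α} [NormedAddCommGroup F] [NormedSpace ℝ F]

lemma norm_integral_smul_le_sqrt_mul_sqrt {g : α → ℝ} {f : α → F} (hg : MemLp g 2 μ)
    (hf : MemLp f 2 μ) :
    ‖∫ x, g x • f x ∂μ‖ ≤ √(∫ x, g x ^ 2 ∂μ) * √(∫ x, ‖f x‖ ^ 2 ∂μ) := by
  have holder := integral_mul_norm_le_Lp_mul_Lq (f := g) (g := fun x => ‖f x‖)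
    Real.HolderConjugate.two_two (by simpa using hg) (by simpa using hf.norm)
  calc ‖∫ x, g x • f x ∂μ‖ ≤ ∫ x, ‖g x • f x‖ ∂μ := norm_integral_le_integral_norm _
    _ = ∫ x, ‖g x‖ * ‖‖f x‖‖ ∂μ := by simp only [norm_smul, norm_norm]
    _ ≤ _ := holder
    _ = _ := by
      simp only [Real.sqrt_eq_rpow, Real.rpow_two, Real.norm_eq_abs, sq_abs]

end CauchySchwarz

section Radial

variable {E : Type*} [SeminormedAddCommGroup E]

lemma tsupport_radial_subset {ρ : ℝ → ℝ} {r : ℝ} (hr : 0 ≤ r) (hρr : ∀ q, r ^ 2 ≤ q → ρ q = 0)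
    (z : E) : tsupport (fun x => ρ (‖x - z‖ ^ 2)) ⊆ closedBall z r := by
  refine closure_minimal (Function.support_subset_iff'.2 fun x hx => ?_) isClosed_closedBall
  rw [mem_closedBall, dist_eq_norm, not_le] at hx
  exact hρr _ (pow_le_pow_left₀ hr hx.le 2)

lemma hasCompactSupport_radial [ProperSpace E] {ρ : ℝ → ℝ} {r : ℝ} (hr : 0 ≤ r)
    (hρr : ∀ q, r ^ 2 ≤ q → ρ q = 0) (z : E) : HasCompactSupport fun x => ρ (‖x - z‖ ^ 2) :=
  (isCompact_closedBall z r).of_isClosed_subset (isClosed_tsupport _)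
    (tsupport_radial_subset hr hρr z)

end Radial

section WeaklyHarmonic

variable {E F : Type*} [NormedAddCommGroup E] [InnerProductSpace ℝ E]

/-- Compactly supported `C¹` vector fields in `s` with symmetric Jacobian. They play the role of the
gradients of test functions, without reference to a potential. -/
structure IsCurlFreeTestField (X : E → E) (s : Set E) : Prop where
  contDiff : ContDiff ℝ 1 X
  hasCompactSupport : HasCompactSupport X
  tsupport_subset : tsupport X ⊆ s
  inner_fderiv_comm : ∀ x a c, ⟪fderiv ℝ X x a, c⟫ = ⟪fderiv ℝ X x c, a⟫

/-- Weak harmonicity of a `C¹` function: the integral of `⟨∇Φ, ∇f⟩` vanishes for every test function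
`Φ`. Encoding `∇Φ` as a curl-free field makes this slightly stronger than harmonicity when the
potential cannot be chosen with compact support in `s`. -/
def IsWeaklyHarmonicOn [FiniteDimensional ℝ E] [MeasurableSpace E] [BorelSpace E]
    [NormedAddCommGroup F] [NormedSpace ℝ F] (f : E → F) (s : Set E) : Prop :=
  ∀ X : E → E, IsCurlFreeTestField X s → ∫ x, fderiv ℝ f x (X x) = 0

lemma isCurlFreeTestField_radial [FiniteDimensional ℝ E] {ρ : ℝ → ℝ} (hρ : ContDiff ℝ 1 ρ) {r : ℝ}
    (hr : 0 ≤ r) (hρr : ∀ q, r ^ 2 ≤ q → ρ q = 0) (z : E) :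
    IsCurlFreeTestField (fun x => ρ (‖x - z‖ ^ 2) • (x - z)) (closedBall z r) := by
  have hid : ContDiff ℝ 1 fun x => x - z := contDiff_id.sub contDiff_const
  have hsupp := (tsupport_smul_subset_left (fun x => ρ (‖x - z‖ ^ 2)) fun x => x - z).trans
    (tsupport_radial_subset hr hρr z)
  refine ⟨(hρ.comp (hid.norm_sq ℝ)).smul hid, (hasCompactSupport_radial hr hρr z).smul_right,
    hsupp, fun x a c => ?_⟩
  have hsub : HasFDerivAt (fun x => x - z) (.id ℝ E) x := (hasFDerivAt_id x).sub_const z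
  have hρx : HasDerivAt ρ (deriv ρ (‖x - z‖ ^ 2)) (‖x - z‖ ^ 2) :=
    (hρ.differentiable one_ne_zero _).hasDerivAt
  have hfderiv : ∀ a, fderiv ℝ (fun x => ρ (‖x - z‖ ^ 2) • (x - z)) x a =
      ρ (‖x - z‖ ^ 2) • a + (deriv ρ (‖x - z‖ ^ 2) * (2 * ⟪x - z, a⟫)) • (x - z) := fun a => by
    have hfield := (hρx.comp_hasFDerivAt x hsub.norm_sq).fun_smul hsub
    simp only [Function.comp_apply] at hfield
    rw [hfield.fderiv]
    simp [inner_sub_left]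
  simp only [hfderiv, inner_add_left, real_inner_smul_left, real_inner_comm a c]
  ring

variable [FiniteDimensional ℝ E] [MeasurableSpace E] [BorelSpace E]
  [NormedAddCommGroup F] [NormedSpace ℝ F]

lemma IsCurlFreeTestField.integral_inner_smul_fderiv_comm {X : E → E} {s : Set E}
    (hX : IsCurlFreeTestField X s) (hs : IsOpen s) {f : E → F} (hf : ContDiffOn ℝ 1 f s)
    (a c : E) :
    ∫ x, ⟪X x, a⟫ • fderiv ℝ f x c = ∫ x, ⟪X x, c⟫ • fderiv ℝ f x a := by
  have hcoord : ∀ a c : E,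
      ∫ x, ⟪X x, a⟫ • fderiv ℝ f x c = -∫ x, ⟪fderiv ℝ X x c, a⟫ • f x := fun a c => by
    have hderiv : ∀ x, fderiv ℝ (fun x => ⟪X x, a⟫) x c = ⟪fderiv ℝ X x c, a⟫ := fun x => by
      rw [fderiv_inner_apply ℝ (hX.contDiff.differentiable one_ne_zero x)
        (differentiableAt_const a)]
      simp
    rw [integral_smul_fderiv_eq_neg_of_tsupport_subset (hX.contDiff.inner ℝ contDiff_const)
      (hX.hasCompactSupport.comp_left (g := fun v => ⟪v, a⟫) (inner_zero_left a)) hs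
      ((tsupport_comp_subset (g := fun v => ⟪v, a⟫) (inner_zero_left a) X).trans
        hX.tsupport_subset) hf]
    simp only [hderiv]
  simp only [hcoord, hX.inner_fderiv_comm _ c a]

lemma IsWeaklyHarmonicOn.integral_smul_fderiv_dilation_eq_zero {f : E → F} {s : Set E}
    (hf : IsWeaklyHarmonicOn f s) {ρ : ℝ → ℝ} (hρ : ContDiff ℝ 1 ρ) {r : ℝ} (hr : 0 ≤ r)
    (hρr : ∀ q, r ^ 2 ≤ q → ρ q = 0) {z : E} {t : ℝ} (ht : 0 < t)
    (hts : closedBall z (t * r) ⊆ s) :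
    ∫ y, ρ (‖y‖ ^ 2) • fderiv ℝ f (z + t • y) y = 0 := by
  let ρt : ℝ → ℝ := fun q => t⁻¹ * ρ (t⁻¹ ^ 2 * q)
  have hρt : ContDiff ℝ 1 ρt := by fun_prop
  have hρt_zero : ∀ q, (t * r) ^ 2 ≤ q → ρt q = 0 := fun q hq => by
    have : r ^ 2 ≤ t⁻¹ ^ 2 * q := by
      rw [inv_pow, inv_mul_eq_div, le_div_iff₀ (by positivity)]
      linarith
    simp only [ρt, hρr _ this, mul_zero]
  have hfield := isCurlFreeTestField_radial hρt (mul_nonneg ht.le hr) hρt_zero z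
  have htest : ∫ x, fderiv ℝ f x (ρt (‖x - z‖ ^ 2) • (x - z)) = 0 :=
    hf _ { hfield with tsupport_subset := hfield.tsupport_subset.trans hts }
  rw [← integral_add_left_eq_self _ z] at htest
  have hscale := Measure.integral_comp_smul volume
    (fun x => fderiv ℝ f (z + x) (ρt (‖z + x - z‖ ^ 2) • (z + x - z))) t
  rw [htest, smul_zero] at hscale
  rw [← hscale]
  congr 1 with y
  have hnorm : t⁻¹ ^ 2 * ‖t • y‖ ^ 2 = ‖y‖ ^ 2 := by
    rw [norm_smul, Real.norm_of_nonneg ht.le]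
    field_simp
  have hcancel : t⁻¹ * ρ (‖y‖ ^ 2) * t = ρ (‖y‖ ^ 2) := by field_simp
  simp only [ρt, add_sub_cancel_left, hnorm, map_smul, smul_smul, hcancel]

/-- The dilation average `t ↦ ∫ ρ(‖y‖²) • f (z + t • y)` has derivative zero, so its values at
`t = 0` and `t = 1` agree. -/
theorem IsWeaklyHarmonicOn.integral_radial_smul_eq [CompleteSpace F] {f : E → F} {s : Set E}
    (hharm : IsWeaklyHarmonicOn f s) (hs : IsOpen s) (hf : ContDiffOn ℝ 1 f s) {ρ : ℝ → ℝ}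
    (hρ : ContDiff ℝ 1 ρ) {r : ℝ} (hr : 0 ≤ r) (hρr : ∀ q, r ^ 2 ≤ q → ρ q = 0) {z : E}
    (hball : closedBall z r ⊆ s) :
    ∫ y, ρ (‖y‖ ^ 2) • f (z + y) = (∫ y : E, ρ (‖y‖ ^ 2)) • f z := by
  have hw : Continuous fun y : E => ρ (‖y‖ ^ 2) := hρ.continuous.comp (by fun_prop)
  have hsupp : tsupport (fun y : E => ρ (‖y‖ ^ 2)) ⊆ closedBall 0 r := by
    simpa only [sub_zero] using tsupport_radial_subset hr hρr (0 : E)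
  have hwc : HasCompactSupport fun y : E => ρ (‖y‖ ^ 2) := by
    simpa only [sub_zero] using hasCompactSupport_radial hr hρr (0 : E)
  have hsub : ∀ t ∈ Icc (0 : ℝ) 1, closedBall z (t * r) ⊆ s := fun t ht =>
    (closedBall_subset_closedBall (mul_le_of_le_one_left hr ht.2)).trans hball
  have hderiv : ∀ t ∈ Icc (0 : ℝ) 1, HasDerivAt (fun τ : ℝ => ∫ y, ρ (‖y‖ ^ 2) • f (z + τ • y))
      (∫ y, ρ (‖y‖ ^ 2) • fderiv ℝ f (z + t • y) y) t := fun t ht => by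
    refine hasDerivAt_integral_smul_comp_dilation hw hwc hs hf fun y hy => hsub t ht ?_
    rw [mem_closedBall, dist_eq_norm, add_sub_cancel_left, norm_smul, Real.norm_of_nonneg ht.1]
    exact mul_le_mul_of_nonneg_left (mem_closedBall_zero_iff.1 (hsupp hy)) ht.1
  have hderiv_zero : ∀ t ∈ Icc (0 : ℝ) 1,
      ∫ y, ρ (‖y‖ ^ 2) • fderiv ℝ f (z + t • y) y = 0 := fun t ht => by
    rcases ht.1.eq_or_lt with rfl | ht0
    · exact integral_eq_zero_of_odd fun y => by simp
    · exact hharm.integral_smul_fderiv_dilation_eq_zero hρ hr hρr ht0 (hsub t ht)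
  have hconst := constant_of_has_deriv_right_zero
    (fun t ht => (hderiv t ht).continuousAt.continuousWithinAt)
    (fun t ht => by
      simpa only [hderiv_zero t (Ico_subset_Icc_self ht)] using
        (hderiv t (Ico_subset_Icc_self ht)).hasDerivWithinAt) 1 (right_mem_Icc.2 zero_le_one)
  simpa only [one_smul, zero_smul, add_zero, integral_smul_const] using hconst

end WeaklyHarmonic

section SymbolOperator
variable {ι E F : Type*} [Fintype ι] [NormedAddCommGroup E] [InnerProductSpace ℝ E]
  [NormedAddCommGroup F] [NormedSpace ℝ F]

/-- The first-order operator `∑ᵢ σ(bᵢ) ∂f/∂bᵢ` with constant symbol `σ`, in the orthonormal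
coordinates `b`. Left multiplication `σ` on the quaternions gives the Cauchy–Riemann operators. -/
def symbolOperator (σ : E →ₗ[ℝ] F →L[ℝ] F) (b : OrthonormalBasis ι ℝ E) (f : E → F) (x : E) : F :=
  ∑ i, σ (b i) (fderiv ℝ f x (b i))

/-- The symbol `σ'` is conjugate to `σ`: the composition of the operators with symbols `σ'` and `σ`
is the Laplacian. -/
def IsConjugateSymbol (σ' : E → Module.End ℝ F) (σ : E →ₗ[ℝ] F →L[ℝ] F) : Prop :=
  ∀ a c x, σ' a (σ c x) + σ' c (σ a x) = (2 * ⟪a, c⟫) • x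

lemma IsConjugateSymbol.sum_diag_eq_zero {σ' : E → Module.End ℝ F} {σ : E →ₗ[ℝ] F →L[ℝ] F}
    (hσ : IsConjugateSymbol σ' σ) (b : OrthonormalBasis ι ℝ E) {T : ι → ι → F}
    (hsymm : ∀ i j, T i j = T j i) (hrow : ∀ i, ∑ j, σ (b j) (T i j) = 0) : ∑ i, T i i = 0 := by
  classical
  have hzero : ∑ i, ∑ j, σ' (b i) (σ (b j) (T i j)) = 0 := by
    simp only [← map_sum, hrow, map_zero, Finset.sum_const_zero]
  have hzero' : ∑ i, ∑ j, σ' (b j) (σ (b i) (T i j)) = 0 := by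
    rw [Finset.sum_comm]
    simpa only [hsymm] using hzero
  have htwo : (2 : ℝ) • ∑ i, T i i = 0 := by
    calc (2 : ℝ) • ∑ i, T i i = ∑ i, ∑ j, (2 * ⟪b i, b j⟫) • T i j := by
          simp [b.inner_eq_ite, Finset.smul_sum]
      _ = 0 := by
          simp only [← hσ (b _) (b _), Finset.sum_add_distrib, hzero, hzero', add_zero]
  exact (smul_eq_zero.1 htwo).resolve_left two_ne_zero

lemma symbolOperator_exp_inner_smul (σ : E →ₗ[ℝ] F →L[ℝ] F) (b : OrthonormalBasis ι ℝ E) (u z : E)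
    {f : E → F} {x : E} (hf : DifferentiableAt ℝ f x) :
    symbolOperator σ b (fun x => Real.exp ⟪u, x - z⟫ • f x) x =
      Real.exp ⟪u, x - z⟫ • (symbolOperator σ b f x + σ u (f x)) := by
  have hinner : HasFDerivAt (fun x => ⟪u, x - z⟫) (innerSL ℝ u) x :=
    (innerSL ℝ u).hasFDerivAt.comp x ((hasFDerivAt_id x).sub_const z)
  have hfderiv : ∀ v, fderiv ℝ (fun x => Real.exp ⟪u, x - z⟫ • f x) x v =
      Real.exp ⟪u, x - z⟫ • (fderiv ℝ f x v + ⟪u, v⟫ • f x) := fun v => by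
    rw [(hinner.exp.fun_smul hf.hasFDerivAt).fderiv]
    simp [mul_smul]
  have hu : σ u (f x) = ∑ i, ⟪u, b i⟫ • σ (b i) (f x) := by
    conv_lhs => rw [← b.sum_repr' u]
    simp [real_inner_comm]
  simp only [symbolOperator, hfderiv, hu, map_smul, map_add, ← Finset.smul_sum,
    Finset.sum_add_distrib]

theorem isWeaklyHarmonicOn_of_symbolOperator_eq_zero [CompleteSpace F] [FiniteDimensional ℝ E]
    [MeasurableSpace E] [BorelSpace E] {σ' : E → Module.End ℝ F} {σ : E →ₗ[ℝ] F →L[ℝ] F}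
    (hσ : IsConjugateSymbol σ' σ) (b : OrthonormalBasis ι ℝ E) {f : E → F} {s : Set E}
    (hs : IsOpen s) (hf : ContDiffOn ℝ 1 f s) (hD : ∀ x ∈ s, symbolOperator σ b f x = 0) :
    IsWeaklyHarmonicOn f s := by
  intro X hX
  have hint : ∀ i j, Integrable fun x => ⟪X x, b i⟫ • fderiv ℝ f x (b j) := fun i j =>
    integrable_smul_of_tsupport_subset (hX.contDiff.continuous.inner continuous_const)
      (hX.hasCompactSupport.comp_left (g := fun v => ⟪v, b i⟫) (inner_zero_left (b i))) hs
      ((tsupport_comp_subset (g := fun v => ⟪v, b i⟫) (inner_zero_left (b i)) X).trans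
        hX.tsupport_subset)
      ((hf.continuousOn_fderiv_of_isOpen hs le_rfl).clm_apply continuousOn_const)
  have hrow : ∀ i, ∑ j, σ (b j) (∫ x, ⟪X x, b i⟫ • fderiv ℝ f x (b j)) = 0 := fun i => by
    simp only [← ContinuousLinearMap.integral_comp_comm _ (hint i _)]
    rw [← integral_finsetSum _ fun j _ => (σ (b j)).integrable_comp (hint i j)]
    refine integral_eq_zero_of_ae (.of_forall fun x => ?_)
    simp only [map_smul, ← Finset.smul_sum, Pi.zero_apply]
    by_cases hx : x ∈ s
    · exact smul_eq_zero_of_right _ (hD x hx)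
    · rw [image_eq_zero_of_notMem_tsupport (notMem_subset hX.tsupport_subset hx), inner_zero_left,
        zero_smul]
  calc ∫ x, fderiv ℝ f x (X x) = ∫ x, ∑ i, ⟪X x, b i⟫ • fderiv ℝ f x (b i) := by
        congr 1 with x
        conv_lhs => rw [← b.sum_repr' (X x)]
        simp [real_inner_comm]
    _ = ∑ i, ∫ x, ⟪X x, b i⟫ • fderiv ℝ f x (b i) := integral_finsetSum _ fun i _ => hint i i
    _ = 0 := hσ.sum_diag_eq_zero b
      (fun i j => hX.integral_inner_smul_fderiv_comm hs hf (b i) (b j)) hrow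

end SymbolOperator

lemma exists_contDiff_nonneg_eq_zero_of_le {R : ℝ} (hR : 0 < R) :
    ∃ ρ : ℝ → ℝ, ContDiff ℝ 1 ρ ∧ (∀ q, 0 ≤ ρ q) ∧ (∀ q, R ≤ q → ρ q = 0) ∧ ρ 0 ≠ 0 :=
  ⟨fun q => Real.smoothTransition (R - q),
    Real.smoothTransition.contDiff.comp (contDiff_const.sub contDiff_id),
    fun _ => Real.smoothTransition.nonneg _,
    fun _ hq => Real.smoothTransition.zero_of_nonpos (sub_nonpos.2 hq),
    (Real.smoothTransition.pos_of_pos (by simpa using hR)).ne'⟩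

lemma integral_sq_pos_of_hasCompactSupport {X : Type*} [TopologicalSpace X]
    [MeasurableSpace X] [OpensMeasurableSpace X] {μ : Measure X} [IsFiniteMeasureOnCompacts μ]
    [μ.IsOpenPosMeasure] {w : X → ℝ} (hw : Continuous w) (hwc : HasCompactSupport w)
    {x : X} (hx : w x ≠ 0) : 0 < ∫ y, w y ^ 2 ∂μ := by
  have hsq : HasCompactSupport fun y => w y ^ 2 := by
    simpa only [sq] using! hwc.mul_left
  exact (hw.pow 2).integral_pos_of_hasCompactSupport_nonneg_nonzero hsq (fun y => sq_nonneg (w y))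
    (pow_ne_zero 2 hx)

section Translation

variable {E F : Type*} [NormedAddCommGroup E] [MeasurableSpace E] [BorelSpace E]
  {μ : Measure E} [IsFiniteMeasureOnCompacts μ] [μ.IsAddLeftInvariant] [NormedAddCommGroup F]
  [NormedSpace ℝ F]

lemma norm_integral_smul_comp_add_le {w : E → ℝ} (hw : Continuous w) (hwc : HasCompactSupport w)
    {ε : ℝ} (hwε : Function.support w ⊆ ball 0 ε) {f : E → F} {z : E}
    (hf : MemLp f 2 (μ.restrict (ball z ε))) :
    ‖∫ y, w y • f (z + y) ∂μ‖ ≤ √(∫ y, w y ^ 2 ∂μ) * √(∫ x in ball z ε, ‖f x‖ ^ 2 ∂μ) := by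
  have hLp : MemLp w 2 μ := hw.memLp_of_hasCompactSupport hwc
  have hLpz : MemLp (fun x => w (x - z)) 2 μ :=
    hLp.comp_measurePreserving (measurePreserving_sub_right μ z)
  have htranslate : ∫ y, w y • f (z + y) ∂μ = ∫ x in ball z ε, w (x - z) • f x ∂μ := by
    rw [setIntegral_eq_integral_of_forall_compl_eq_zero fun x hx => ?_]
    · simpa only [add_sub_cancel_left] using
        integral_add_left_eq_self (fun x => w (x - z) • f x) z
    · have : w (x - z) = 0 := Function.notMem_support.1 fun h =>
        hx (by simpa [dist_eq_norm] using hwε h)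
      rw [this, zero_smul]
  rw [htranslate]
  refine (norm_integral_smul_le_sqrt_mul_sqrt (hLpz.restrict _) hf).trans ?_
  gcongr ?_ * _
  refine Real.sqrt_le_sqrt ?_
  calc ∫ x in ball z ε, w (x - z) ^ 2 ∂μ ≤ ∫ x, w (x - z) ^ 2 ∂μ :=
        setIntegral_le_integral hLpz.integrable_sq (.of_forall fun x => sq_nonneg _)
    _ = ∫ y, w y ^ 2 ∂μ := integral_sub_right_eq_self (fun y => w y ^ 2) z

lemma norm_le_of_integral_smul_comp_add_eq {w : E → ℝ} (hw : Continuous w)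
    (hwc : HasCompactSupport w) {ε : ℝ} (hwε : Function.support w ⊆ ball 0 ε) {f : E → F} {z : E}
    (hf : MemLp f 2 (μ.restrict (ball z ε))) {m : ℝ} (hm : 0 < m)
    (hmean : ∫ y, w y • f (z + y) ∂μ = m • f z) :
    ‖f z‖ ≤ √(∫ y, w y ^ 2 ∂μ) / m * √(∫ x in ball z ε, ‖f x‖ ^ 2 ∂μ) := by
  have hCS := norm_integral_smul_comp_add_le hw hwc hwε hf
  rwa [hmean, norm_smul, Real.norm_of_nonneg hm.le, ← le_div_iff₀' hm, mul_div_right_comm] at hCS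

end Translation

theorem integral_exp_inner_mul_radial_smul_eq {ι E F : Type*} [Fintype ι] [NormedAddCommGroup E]
    [InnerProductSpace ℝ E] [FiniteDimensional ℝ E] [MeasurableSpace E] [BorelSpace E]
    [NormedAddCommGroup F] [NormedSpace ℝ F] [CompleteSpace F]
    {σ' : E → Module.End ℝ F} {σ : E →ₗ[ℝ] F →L[ℝ] F} (hσ : IsConjugateSymbol σ' σ)
    (b : OrthonormalBasis ι ℝ E) (u : E) {f : E → F} {s : Set E} (hs : IsOpen s)
    (hf : ContDiffOn ℝ 1 f s) (hD : ∀ x ∈ s, symbolOperator σ b f x + σ u (f x) = 0)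
    {ρ : ℝ → ℝ} (hρ : ContDiff ℝ 1 ρ) {r : ℝ} (hr : 0 ≤ r) (hρr : ∀ q, r ^ 2 ≤ q → ρ q = 0)
    {z : E} (hball : closedBall z r ⊆ s) :
    ∫ y, (Real.exp ⟪u, y⟫ * ρ (‖y‖ ^ 2)) • f (z + y) = (∫ y : E, ρ (‖y‖ ^ 2)) • f z := by
  have hexp : ContDiff ℝ 1 fun x => Real.exp ⟪u, x - z⟫ :=
    (contDiff_const.inner ℝ (contDiff_id.sub contDiff_const)).exp
  have hgauge : ContDiffOn ℝ 1 (fun x => Real.exp ⟪u, x - z⟫ • f x) s := hexp.contDiffOn.smul hf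
  have hgaugeD : ∀ x ∈ s, symbolOperator σ b (fun x => Real.exp ⟪u, x - z⟫ • f x) x = 0 :=
    fun x hx => by
      have hfx := (hf.contDiffAt (hs.mem_nhds hx)).differentiableAt one_ne_zero
      rw [symbolOperator_exp_inner_smul σ b u z hfx, hD x hx, smul_zero]
  have hmean := (isWeaklyHarmonicOn_of_symbolOperator_eq_zero hσ b hs hgauge
    hgaugeD).integral_radial_smul_eq hs hgauge hρ hr hρr hball
  simpa only [add_sub_cancel_left, sub_self, inner_zero_right, Real.exp_zero, one_smul, smul_smul,
    mul_comm] using hmean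

theorem statement6_general {ι E F : Type*} [Fintype ι] [NormedAddCommGroup E]
    [InnerProductSpace ℝ E] [FiniteDimensional ℝ E] [MeasurableSpace E] [BorelSpace E]
    [NormedAddCommGroup F] [NormedSpace ℝ F] [CompleteSpace F]
    {σ' : E → Module.End ℝ F} {σ : E →ₗ[ℝ] F →L[ℝ] F} (hσ : IsConjugateSymbol σ' σ)
    (b : OrthonormalBasis ι ℝ E) (u : E) {ε : ℝ} (hε : 0 < ε) :
    ∃ k > (0 : ℝ), ∀ (z : E) (f : E → F), ContDiffOn ℝ 1 f (ball z ε) →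
      MemLp f 2 (volume.restrict (ball z ε)) →
      (∀ x ∈ ball z ε, symbolOperator σ b f x + σ u (f x) = 0) →
      ‖f z‖ ≤ k * √(∫ x in ball z ε, ‖f x‖ ^ 2) := by
  obtain ⟨ρ, hρ, hρ_nonneg, hρ_zero, hρ0⟩ :=
    exists_contDiff_nonneg_eq_zero_of_le (pow_pos (half_pos hε) 2)
  have hw : Continuous fun y : E => ρ (‖y‖ ^ 2) := hρ.continuous.comp (by fun_prop)
  have hwc : HasCompactSupport fun y : E => ρ (‖y‖ ^ 2) := by
    simpa only [sub_zero] using hasCompactSupport_radial (half_pos hε).le hρ_zero (0 : E)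
  have hwε : tsupport (fun y : E => ρ (‖y‖ ^ 2)) ⊆ ball 0 ε := by
    simpa only [sub_zero] using (tsupport_radial_subset (half_pos hε).le hρ_zero (0 : E)).trans
      (closedBall_subset_ball (half_lt_self hε))
  have hw0 : ρ (‖(0 : E)‖ ^ 2) ≠ 0 := by simpa using hρ0
  have hw_pos : 0 < ∫ y : E, ρ (‖y‖ ^ 2) :=
    hw.integral_pos_of_hasCompactSupport_nonneg_nonzero hwc (fun y => hρ_nonneg _) hw0
  have hv : Continuous fun y => Real.exp ⟪u, y⟫ * ρ (‖y‖ ^ 2) := by fun_prop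
  have hvc : HasCompactSupport fun y => Real.exp ⟪u, y⟫ * ρ (‖y‖ ^ 2) := hwc.mul_left
  have hv_pos := integral_sq_pos_of_hasCompactSupport (μ := volume) hv hvc
    (mul_ne_zero (Real.exp_ne_zero _) hw0)
  refine ⟨_, div_pos (Real.sqrt_pos.2 hv_pos) hw_pos, fun z f hf hfLp hD =>
    norm_le_of_integral_smul_comp_add_eq hv hvc ?_ hfLp hw_pos ?_⟩
  · exact (Function.support_mul_subset_right _ _).trans ((subset_tsupport _).trans hwε)
  · exact integral_exp_inner_mul_radial_smul_eq hσ b u isOpen_ball hf hD hρ (half_pos hε).le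
      hρ_zero (closedBall_subset_ball (half_lt_self hε))

section Quaternion

lemma inner_eq_sum_components (a c : H4) :
    ⟪a, c⟫ = a.re * c.re + a.imI * c.imI + a.imJ * c.imJ + a.imK * c.imK := by
  simp [Quaternion.inner_def]

lemma isConjugateSymbol_mul :
    IsConjugateSymbol (fun a => LinearMap.mulLeft ℝ (star a))
      (ContinuousLinearMap.mul ℝ H4).toLinearMap := by
  have hpolar : ∀ a c : H4, star a * c + star c * a = ((2 * ⟪a, c⟫ : ℝ) : H4) := fun a c => by
    rw [inner_eq_sum_components]
    ext <;> simp <;> ring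
  intro a c x
  simp [← mul_assoc, ← add_mul, hpolar, Quaternion.coe_mul_eq_smul, mul_smul]

lemma e2_eq_mk (θ : ℝ) : e2 θ = ⟨0, 0, -Real.sin θ, Real.cos θ⟩ := by
  unfold e2
  ext <;> simp only [Quaternion.re_mul, Quaternion.imI_mul, Quaternion.imJ_mul,
    Quaternion.imK_mul] <;> simp [qI, eIθ, qJ]

lemma e3_eq_mk (θ : ℝ) : e3 θ = ⟨0, 0, Real.cos θ, Real.sin θ⟩ := by
  unfold e3
  ext <;> simp only [Quaternion.re_mul, Quaternion.imI_mul, Quaternion.imJ_mul,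
    Quaternion.imK_mul] <;> simp [eIθ, qJ]

lemma orthonormal_theta (θ : ℝ) : Orthonormal ℝ ![1, qI, e2 θ, e3 θ] := by
  have hone : (1 : H4) = ⟨1, 0, 0, 0⟩ := rfl
  have hθ := Real.sin_sq_add_cos_sq θ
  rw [orthonormal_iff_ite]
  intro i j
  rw [inner_eq_sum_components, hone, e2_eq_mk, e3_eq_mk, qI]
  fin_cases i <;> fin_cases j <;> simp <;> linarith

/-- The orthonormal basis `1, i, i e^{iθ} j, e^{iθ} j` of the quaternions, whose coordinates are the
θ-coordinates. -/
def thetaBasis (θ : ℝ) : OrthonormalBasis (Fin 4) ℝ H4 :=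
  OrthonormalBasis.mk (orthonormal_theta θ)
    ((orthonormal_theta θ).linearIndependent.span_eq_top_of_card_eq_finrank'
      (by simp [Quaternion.finrank_eq_four])).ge

lemma Dlu_eq_symbolOperator_add (θ : ℝ) (u : H4) (f : H4 → H4) (x : H4) :
    Dlu θ u f x = symbolOperator (ContinuousLinearMap.mul ℝ H4).toLinearMap (thetaBasis θ) f x +
      ContinuousLinearMap.mul ℝ H4 u (f x) := by
  simp [Dlu, Dl, symbolOperator, thetaBasis, Fin.sum_univ_four]

end Quaternion

lemma memLp_restrict_ball_of_continuousOn_closedBall {E F : Type*} [PseudoMetricSpace E]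
    [ProperSpace E] [MeasurableSpace E] [OpensMeasurableSpace E] {μ : Measure E}
    [IsFiniteMeasureOnCompacts μ] [NormedAddCommGroup F] {f : E → F} {z : E} {ε : ℝ}
    (hf : ContinuousOn f (closedBall z ε)) (p : ENNReal) : MemLp f p (μ.restrict (ball z ε)) := by
  have hcompact := isCompact_closedBall z ε
  obtain ⟨C, hC⟩ := hcompact.exists_bound_of_continuousOn hf
  have : IsFiniteMeasure (μ.restrict (closedBall z ε)) := ⟨by simpa using hcompact.measure_lt_top⟩
  exact (MemLp.of_bound (hf.aestronglyMeasurable_of_isCompact hcompact measurableSet_closedBall) C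
    (ae_restrict_of_forall_mem measurableSet_closedBall hC)).mono_measure
      (Measure.restrict_mono ball_subset_closedBall le_rfl)

/-- local boundedness of the evaluation: if `closedBall z ε ⊆ Ω` then there is
`k > 0` with `|f(z)| ≤ k (∫_{B(z,ε)} |f|² dμ)^{1/2}` for every (θ,u)-hyperholomorphic f. -/
theorem statement6 (Ω : Set H4) (hΩo : IsOpen Ω) (hΩc : IsConnected Ω)
    (θ : ℝ) (hθ : θ ∈ Set.Ico 0 (2 * Real.pi)) (u : H4)
    (z : H4) (ε : ℝ) (hε : 0 < ε) (hball : Metric.closedBall z ε ⊆ Ω) :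
    ∃ k > (0 : ℝ), ∀ f : H4 → H4, ContDiffOn ℝ 1 f Ω → (∀ w ∈ Ω, Dlu θ u f w = 0) →
      ‖f z‖ ≤ k * Real.sqrt (∫ ζ in Metric.ball z ε, ‖f ζ‖ ^ 2) := by
  obtain ⟨k, hk, hbound⟩ := statement6_general isConjugateSymbol_mul (thetaBasis θ) u hε
  have hsub : ball z ε ⊆ Ω := ball_subset_closedBall.trans hball
  refine ⟨k, hk, fun f hf hD => hbound z f (hf.mono hsub) ?_ fun x hx => ?_⟩
  · exact memLp_restrict_ball_of_continuousOn_closedBall (hf.continuousOn.mono hball) 2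
  · exact (Dlu_eq_symbolOperator_add θ u f x).symm.trans (hD x (hsub hx))

end
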